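/- Suppose 1 ≤ m < q and either m < p or m = p^k for some k. Then there is an injective 𝕜G-module homomorphism V_m → V_q whose cokernel is isomorphic to V_{q−m}; equivalently, Ω^{−1}(V_m) ≅ V_{q−m}, where Ω^{−1} denotes the cokernel of the embedding into the injective hull. -/

import Mathlib

/-! The entries of `Bmat` are the coefficients of `(X - α)^k`, so `V_m` is the dual of the space
`P_m` of polynomials of degree `< m`, on which `E` acts by translation: a vector `v` is the
functional `X^i ↦ v_i`.

* Pairing a function on `E` with the moment vectors `w(e) = (1, e, e², …)` identifies the functions
  on `E` with `V_q`, by Vandermonde. A polynomial of degree `< m` has vanishing moments of order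
  `< q - m`, because the power sums of `E` of exponent below `q - 1` vanish (`sum_pow_eq_zero`).
  So `P_m` lands in the kernel of the truncation `V_q → V_{q-m}`, and equals it by dimension.
  This gives an exact sequence `0 → P_m → V_q → V_{q-m} → 0` for every `m < q`.
* The map `V_m → P_m`, `v ↦ (e ↦ last coordinate of e · v)`, is equivariant. Its coefficients are
  `± C(m-1, i) v_i`, so it is an isomorphism exactly when no `C(m-1, i)` vanishes in `𝕜`. That is
  the case for `m < p` and for `m = p^k` (`choose_ne_zero`).

The vanishing of power sums also rests on `C(q-1, i) ≠ 0`: the polynomial `∑_e (X + e)^(q-1)` has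
degree less than `q` and is constant on `E`, hence is constant, and its coefficients are the power
sums multiplied by these binomials. -/

/-!
Setting (common to the paper "Tensor products and symmetric powers of modular
representations of elementary abelian p-groups"):

`p` is a prime, `𝕜` a field of characteristic `p`, `q = p^n`, and `G` an elementary
abelian `p`-group of order `q`, identified with an additive subgroup `E ⊆ 𝕜` of order
`q` via a faithful indecomposable 2-dimensional module `W`, on which `α ∈ E` acts by
`[[1, α], [0, 1]]`.  For `1 ≤ m ≤ q`, `V_m = S^{m-1}(W)^*` is modelled concretely as
`𝕜^m` with basis `x_0, …, x_{m-1}`, on which `α ∈ E` acts by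
`α · x_i = ∑_{j=0}^{m-1-i} C(i+j, i) (−α)^j x_{i+j}`.
-/

open scoped BigOperators TensorProduct
open CategoryTheory CategoryTheory.Limits MonoidalCategory MvPolynomial

namespace ElemAbelianPaper

variable (𝕜 : Type) [Field 𝕜]

/-- The matrix of the action of `α` on `V_m` in the basis `x_0, …, x_{m-1}`:
entry `(k, i)` is `C(k,i) (−α)^{k−i}`, encoding `α · x_i = ∑_j C(i+j,i) (−α)^j x_{i+j}`. -/
noncomputable def Bmat (m : ℕ) (α : 𝕜) : Matrix (Fin m) (Fin m) 𝕜 :=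
  Matrix.of fun k i => ((k : ℕ).choose (i : ℕ) : 𝕜) * (-α) ^ ((k : ℕ) - (i : ℕ))

/-- The action of `α ∈ 𝕜` on `V_m = 𝕜^m`. -/
noncomputable def Vact (m : ℕ) (α : 𝕜) : (Fin m → 𝕜) →ₗ[𝕜] (Fin m → 𝕜) :=
  (Bmat 𝕜 m α).mulVecLin

/-- From Pascal's rule and `p ∣ C(p^k, i+1)`: the entries of row `p^k - 1` are `± 1` mod `p`. -/
lemma choose_prime_pow_sub_one (p : ℕ) (hp : p.Prime) [CharP 𝕜 p] (k i : ℕ) (hi : i < p ^ k) :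
    ((p ^ k - 1).choose i : 𝕜) = (-1) ^ i := by
  induction i with
  | zero => simp
  | succ i ih =>
    have hdvd : p ∣ (p ^ k).choose (i + 1) :=
      hp.dvd_choose_pow (by omega) (by omega)
    have hz : ((p ^ k).choose (i + 1) : 𝕜) = 0 := (CharP.cast_eq_zero_iff 𝕜 p _).2 hdvd
    have hs : p ^ k = (p ^ k - 1) + 1 := by omega
    rw [hs, Nat.choose_succ_succ, Nat.cast_add, ih (by omega)] at hz
    rw [pow_succ]
    linear_combination hz

lemma choose_ne_zero (p : ℕ) (hp : p.Prime) [CharP 𝕜 p] (m : ℕ)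
    (h : m < p ∨ ∃ k : ℕ, m = p ^ k) (i : ℕ) (hi : i < m) :
    ((m - 1).choose i : 𝕜) ≠ 0 := by
  rcases h with h | ⟨k, rfl⟩
  · rw [Ne, CharP.cast_eq_zero_iff 𝕜 p]
    intro hd
    have h1 := Nat.choose_mul_factorial_mul_factorial (show i ≤ m - 1 by omega)
    have h2 : p ∣ (m - 1).factorial := by
      rw [← h1, mul_assoc]
      exact hd.mul_right _
    have := (hp.dvd_factorial).1 h2
    omega
  · rw [choose_prime_pow_sub_one 𝕜 p hp k i hi]
    exact pow_ne_zero _ (by simp)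

/-- The power sums of an additive subgroup of order `q` vanish for exponents below `q - 1`. -/
lemma sum_pow_eq_zero (p n : ℕ) (hp : p.Prime) [CharP 𝕜 p]
    (E : AddSubgroup 𝕜) [Fintype E] (hE : Nat.card E = p ^ n) (j : ℕ) (hj : j < p ^ n - 1) :
    ∑ e : E, (e : 𝕜) ^ j = 0 := by
  classical
  set N := p ^ n - 1 with hN
  let F : Polynomial 𝕜 := ∑ e : E, (Polynomial.X + Polynomial.C (e : 𝕜)) ^ N
  have hdeg : F.natDegree ≤ N := by
    refine Polynomial.natDegree_sum_le_of_forall_le _ _ fun e _ => ?_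
    refine Polynomial.natDegree_pow_le.trans ?_
    simp
  have heval : ∀ a : E, F.eval (a : 𝕜) = ∑ e : E, (e : 𝕜) ^ N := by
    intro a
    simp only [F, Polynomial.eval_finsetSum, Polynomial.eval_pow, Polynomial.eval_add,
      Polynomial.eval_X, Polynomial.eval_C]
    exact Equiv.sum_comp (Equiv.addLeft a) (fun e : E => (e : 𝕜) ^ N)
  have hconst : F = Polynomial.C (∑ e : E, (e : 𝕜) ^ N) := by
    rw [← sub_eq_zero]
    refine Polynomial.eq_zero_of_natDegree_lt_card_of_eval_eq_zero _ Subtype.val_injective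
      (fun a : E => by rw [Polynomial.eval_sub, Polynomial.eval_C, heval, sub_self]) ?_
    rw [← Nat.card_eq_fintype_card, hE]
    have := Polynomial.natDegree_sub_C (p := F) (a := ∑ e : E, (e : 𝕜) ^ N)
    omega
  have hc : F.coeff (N - j) = 0 := by
    rw [hconst, Polynomial.coeff_C, if_neg (by omega)]
  have hc' : F.coeff (N - j) = (∑ e : E, (e : 𝕜) ^ j) * (N.choose (N - j) : 𝕜) := by
    simp only [F, Polynomial.finsetSum_coeff, Polynomial.coeff_X_add_C_pow, Finset.sum_mul]
    rw [show N - (N - j) = j by omega]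
  rw [hc] at hc'
  refine (mul_eq_zero.1 hc'.symm).resolve_right ?_
  exact choose_ne_zero 𝕜 p hp (p ^ n) (Or.inr ⟨n, rfl⟩) _ (by omega)

lemma Vact_apply (m : ℕ) (α : 𝕜) (v : Fin m → 𝕜) (k : Fin m) :
    Vact 𝕜 m α v k =
      ∑ i : Fin m, ((k : ℕ).choose (i : ℕ) : 𝕜) * (-α) ^ ((k : ℕ) - (i : ℕ)) * v i := by
  simp [Vact, Bmat, Matrix.mulVec, dotProduct]

/-- Row `k` of `Bmat` lists the coefficients of `(X - α)^k`. -/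
lemma Bmat_apply (m : ℕ) (α : 𝕜) (k i : Fin m) :
    Bmat 𝕜 m α k i = ((Polynomial.X - Polynomial.C α) ^ (k : ℕ)).coeff (i : ℕ) := by
  rw [sub_eq_add_neg, ← Polynomial.C_neg, Polynomial.coeff_X_add_C_pow, Bmat, Matrix.of_apply,
    mul_comm]

/-- Additivity of the action in `α`, read off from `(X - β)^k ∘ (X - α) = (X - (β + α))^k`. -/
lemma Vact_Vact (m : ℕ) (α β : 𝕜) (v : Fin m → 𝕜) :
    Vact 𝕜 m β (Vact 𝕜 m α v) = Vact 𝕜 m (β + α) v := by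
  simp only [Vact, Matrix.mulVecLin_apply, Matrix.mulVec_mulVec]
  congr 1
  ext k j
  have hcomp : ((Polynomial.X - Polynomial.C β) ^ (k : ℕ)).comp
      (Polynomial.X - Polynomial.C α) = (Polynomial.X - Polynomial.C (β + α)) ^ (k : ℕ) := by
    simp only [Polynomial.pow_comp, Polynomial.sub_comp, Polynomial.X_comp, Polynomial.C_comp,
      Polynomial.C_add]
    congr 1
    ring
  have hdeg : ((Polynomial.X - Polynomial.C β) ^ (k : ℕ)).natDegree < m := by
    rw [Polynomial.natDegree_pow, Polynomial.natDegree_X_sub_C, mul_one]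
    exact k.2
  rw [Matrix.mul_apply, Bmat_apply, ← hcomp, Polynomial.comp,
    Polynomial.eval₂_eq_sum_range' _ hdeg, Polynomial.finsetSum_coeff, Finset.sum_range]
  simp only [Polynomial.coeff_C_mul, Bmat_apply]

/-- The moment vector `(1, e, e², …)`, i.e. evaluation at `e` as a functional on polynomials of
degree `< q`. -/
def moment (q : ℕ) (e : 𝕜) : Fin q → 𝕜 := fun k => e ^ (k : ℕ)

lemma Vact_moment (q : ℕ) (α e : 𝕜) : Vact 𝕜 q α (moment 𝕜 q e) = moment 𝕜 q (e - α) := by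
  ext k
  simp only [Vact_apply, moment]
  rw [sub_eq_add_neg, add_pow]
  -- the terms with `i > k` vanish because the binomial coefficient does
  rw [← Finset.sum_range (fun i => ((k : ℕ).choose i : 𝕜) * (-α) ^ ((k : ℕ) - i) * e ^ i),
    ← Finset.sum_subset (Finset.range_mono (show (k : ℕ) + 1 ≤ q from k.2))]
  · exact Finset.sum_congr rfl fun i _ => by ring
  · intro i _ hi
    rw [Nat.choose_eq_zero_of_lt (by simpa using hi)]
    simp

/-- The embedding `V_{M+1} → V_q`: the function `e ↦` (last coordinate of `e · v`) on `E`,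
followed by taking moments. -/
noncomputable def heller (M q : ℕ) (E : AddSubgroup 𝕜) [Fintype E] :
    (Fin (M + 1) → 𝕜) →ₗ[𝕜] (Fin q → 𝕜) :=
  ∑ e : E, ((LinearMap.proj (Fin.last M)).comp (Vact 𝕜 (M + 1) (e : 𝕜))).smulRight
    (moment 𝕜 q (e : 𝕜))

lemma heller_apply (M q : ℕ) (E : AddSubgroup 𝕜) [Fintype E] (v : Fin (M + 1) → 𝕜) :
    heller 𝕜 M q E v =
      ∑ e : E, Vact 𝕜 (M + 1) (e : 𝕜) v (Fin.last M) • moment 𝕜 q (e : 𝕜) := by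
  simp [heller]

lemma heller_equivariant (M q : ℕ) (E : AddSubgroup 𝕜) [Fintype E] (α : 𝕜) (hα : α ∈ E)
    (v : Fin (M + 1) → 𝕜) :
    heller 𝕜 M q E (Vact 𝕜 (M + 1) α v) = Vact 𝕜 q α (heller 𝕜 M q E v) := by
  simp only [heller_apply, map_sum, map_smul, Vact_moment, Vact_Vact]
  rw [← Equiv.sum_comp (Equiv.addRight (⟨α, hα⟩ : E))
    (fun e : E => Vact 𝕜 (M + 1) (e : 𝕜) v (Fin.last M) • moment 𝕜 q ((e : 𝕜) - α))]
  simp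

/-- Injectivity, by Vandermonde applied twice: on all of `E` to recover a function from its moments,
and on `M + 1` points of `E` to recover a polynomial of degree `≤ M` from its values. -/
lemma heller_injective (M q : ℕ) (E : AddSubgroup 𝕜) [Fintype E] (hE : Nat.card E = q)
    (hM : M + 1 ≤ q) (hch : ∀ i, i < M + 1 → (M.choose i : 𝕜) ≠ 0) :
    Function.Injective (heller 𝕜 M q E) := by
  rw [← LinearMap.ker_eq_bot, LinearMap.ker_eq_bot']
  intro v hv
  let ε : Fin q ≃ E := (Finite.equivFinOfCardEq hE).symm
  have hε : Function.Injective (fun j : Fin q => (ε j : 𝕜)) :=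
    Subtype.val_injective.comp ε.injective
  have h1 : (fun j : Fin q => Vact 𝕜 (M + 1) (ε j : 𝕜) v (Fin.last M)) = 0 := by
    refine Matrix.eq_zero_of_forall_pow_sum_mul_pow_eq_zero hε fun i => ?_
    have := congrFun hv i
    rw [heller_apply, ← ε.sum_comp] at this
    simpa [moment] using this
  have h2 : (fun i : Fin (M + 1) =>
      (M.choose (i.rev : ℕ) : 𝕜) * (-1) ^ (i : ℕ) * v i.rev) = 0 := by
    refine Matrix.eq_zero_of_forall_index_sum_pow_mul_eq_zero
      (f := fun j : Fin (M + 1) => (ε (Fin.castLE hM j) : 𝕜))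
      (hε.comp (Fin.castLE_injective hM)) fun j => ?_
    have := congrFun h1 (Fin.castLE hM j)
    simp only [Vact_apply, Pi.zero_apply, Fin.val_last] at this
    rw [← Equiv.sum_comp Fin.revPerm] at this
    rw [← this]
    refine Finset.sum_congr rfl fun i _ => ?_
    have hi : M - (i.rev : ℕ) = i := by
      rw [Fin.val_rev]
      omega
    rw [Fin.revPerm_apply, hi, neg_pow]
    ring
  ext i
  have h3 := congrFun h2 i.rev
  simp only [Fin.rev_rev, Pi.zero_apply] at h3
  refine (mul_eq_zero.1 h3).resolve_left (mul_ne_zero (hch i i.2) ?_)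
  exact pow_ne_zero _ (by simp)

/-- The image of the embedding is killed by truncation to the first `q - (M + 1)` coordinates. -/
lemma heller_apply_eq_zero (p n : ℕ) (hp : p.Prime) [CharP 𝕜 p] (M : ℕ)
    (E : AddSubgroup 𝕜) [Fintype E] (hE : Nat.card E = p ^ n) (v : Fin (M + 1) → 𝕜)
    (k : Fin (p ^ n)) (hk : (k : ℕ) < p ^ n - (M + 1)) :
    heller 𝕜 M (p ^ n) E v k = 0 := by
  simp only [heller_apply, Finset.sum_apply, Pi.smul_apply, smul_eq_mul, moment, Vact_apply,
    Finset.sum_mul, Fin.val_last]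
  rw [Finset.sum_comm]
  refine Finset.sum_eq_zero fun i _ => ?_
  have h := sum_pow_eq_zero 𝕜 p n hp E hE (M - (i : ℕ) + k) (by omega)
  have : ∀ e : E, (M.choose (i : ℕ) : 𝕜) * (-(e : 𝕜)) ^ (M - (i : ℕ)) * v i * (e : 𝕜) ^ (k : ℕ)
      = (M.choose (i : ℕ) : 𝕜) * (-1) ^ (M - (i : ℕ)) * v i * (e : 𝕜) ^ (M - (i : ℕ) + k) := by
    intro e
    rw [neg_pow, pow_add]
    ring
  simp only [this]
  rw [← Finset.mul_sum, h, mul_zero]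

/-- The truncation `V_q → V_r`, dual to the inclusion of polynomials of degree `< r`. -/
def trunc {q r : ℕ} (h : r ≤ q) : (Fin q → 𝕜) →ₗ[𝕜] (Fin r → 𝕜) :=
  LinearMap.funLeft 𝕜 𝕜 (Fin.castLE h)

lemma trunc_surjective {q r : ℕ} (h : r ≤ q) : Function.Surjective (trunc 𝕜 h) :=
  LinearMap.funLeft_surjective_of_injective 𝕜 𝕜 _ (Fin.castLE_injective h)

lemma trunc_equivariant {q r : ℕ} (h : r ≤ q) (α : 𝕜) (v : Fin q → 𝕜) :
    trunc 𝕜 h (Vact 𝕜 q α v) = Vact 𝕜 r α (trunc 𝕜 h v) := by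
  ext k
  simp only [trunc, LinearMap.funLeft_apply, Vact_apply, Fin.val_castLE]
  -- `Bmat` is lower triangular, so only the coordinates in the image of `castLE` contribute
  refine (Finset.sum_of_injOn (Fin.castLE h) (Fin.castLE_injective h).injOn
    (fun _ _ => Finset.mem_coe.2 (Finset.mem_univ _)) (fun i _ hi => ?_) (fun i _ => ?_)).symm
  · have hri : r ≤ (i : ℕ) := by
      by_contra hlt
      exact hi ⟨⟨i, by omega⟩, by simp, by ext; simp⟩
    rw [Nat.choose_eq_zero_of_lt (lt_of_lt_of_le k.2 hri)]
    simp
  · simp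

lemma range_heller (p n : ℕ) (hp : p.Prime) [CharP 𝕜 p] (M : ℕ)
    (E : AddSubgroup 𝕜) [Fintype E] (hE : Nat.card E = p ^ n) (hM : M + 1 ≤ p ^ n)
    (hinj : Function.Injective (heller 𝕜 M (p ^ n) E)) :
    LinearMap.range (heller 𝕜 M (p ^ n) E) =
      LinearMap.ker (trunc 𝕜 (Nat.sub_le (p ^ n) (M + 1))) := by
  apply Submodule.eq_of_le_of_finrank_eq
  · rintro _ ⟨v, rfl⟩
    rw [LinearMap.mem_ker]
    ext k
    exact heller_apply_eq_zero 𝕜 p n hp M E hE v _ k.2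
  · have h1 := LinearMap.finrank_range_of_inj hinj
    have h2 := (trunc 𝕜 (Nat.sub_le (p ^ n) (M + 1))).finrank_range_add_finrank_ker
    rw [LinearMap.range_eq_top.2 (trunc_surjective 𝕜 _), finrank_top] at h2
    simp only [Module.finrank_fin_fun] at h1 h2
    omega

/-- **Proposition (inverse Heller shift).** Suppose `1 ≤ m < q` and either `m < p` or
`m = p^k` for some `k`.  Then there is an injective `𝕜G`-homomorphism `V_m → V_q`
whose cokernel is isomorphic to `V_{q−m}`; equivalently `Ω^{−1}(V_m) ≅ V_{q−m}`. -/
theorem inverse_heller_shift (p n : ℕ) (hp : p.Prime) [CharP 𝕜 p]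
    (E : AddSubgroup 𝕜) (hE : Nat.card E = p ^ n)
    (m : ℕ) (hm1 : 1 ≤ m) (hm : m < p ^ n)
    (h : m < p ∨ ∃ k : ℕ, m = p ^ k) :
    ∃ g : (Fin m → 𝕜) →ₗ[𝕜] (Fin (p ^ n) → 𝕜),
      Function.Injective g ∧
      (∀ α ∈ E, ∀ v, g (Vact 𝕜 m α v) = Vact 𝕜 (p ^ n) α (g v)) ∧
      ∃ e : ((Fin (p ^ n) → 𝕜) ⧸ LinearMap.range g) ≃ₗ[𝕜] (Fin (p ^ n - m) → 𝕜),
        ∀ α ∈ E, ∀ v : Fin (p ^ n) → 𝕜,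
          e (Submodule.Quotient.mk (Vact 𝕜 (p ^ n) α v))
            = Vact 𝕜 (p ^ n - m) α (e (Submodule.Quotient.mk v)) := by
  obtain ⟨M, rfl⟩ : ∃ M, m = M + 1 := ⟨m - 1, by omega⟩
  have : Finite E := Nat.finite_of_card_ne_zero (hE ▸ pow_ne_zero _ hp.ne_zero)
  have := Fintype.ofFinite E
  have hinj := heller_injective 𝕜 M (p ^ n) E hE hm.le
    fun i hi => choose_ne_zero 𝕜 p hp (M + 1) h i hi
  refine ⟨heller 𝕜 M (p ^ n) E, hinj, fun α hα v => heller_equivariant 𝕜 M _ E α hα v,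
    (Submodule.quotEquivOfEq _ _ (range_heller 𝕜 p n hp M E hE hm.le hinj)).trans
      ((trunc 𝕜 (Nat.sub_le (p ^ n) (M + 1))).quotKerEquivOfSurjective (trunc_surjective 𝕜 _)),
    fun α _ v => ?_⟩
  exact trunc_equivariant 𝕜 _ α v

end ElemAbelianPaper
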